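/- Let b₀ > 0 and let a : [0,∞) → ℝ satisfy ∫₀^R a(r)² r dr < ∞ for every R > 0, and suppose there is r₁ > 0 such that a is differentiable on [r₁,∞) with a'(r) = b₀ for all r ≥ r₁. Then for every n ≥ 1 there exist γ_n > 0 and k₀ > 0 such that for all k ≥ k₀, the min-max value with m = 0 satisfies μ_{n,0}(−k) ≤ (2n−1) b₀ − γ_n k⁻². -/

import Mathlib

open MeasureTheory Set Filter

noncomputable section

/-- A radial test function: smooth, compactly supported, with support in `(0,∞)`. -/
def IsTestR (g : ℝ → ℝ) : Prop :=
  ContDiff ℝ (⊤ : ℕ∞) g ∧ HasCompactSupport g ∧ tsupport g ⊆ Set.Ioi 0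

/-- The quadratic form
`l_m[g;p] = ∫₀^∞ (|g'|² + (m² - 1/4) r⁻² |g|² + (a(r)+p)² |g|²) dr`
of the fiber operator `L_m(p)` in `L²((0,∞))`. -/
def lForm (a : ℝ → ℝ) (m : ℤ) (p : ℝ) (g : ℝ → ℝ) : ℝ :=
  ∫ r in Set.Ioi (0:ℝ),
    ((deriv g r) ^ 2 + ((m : ℝ) ^ 2 - 1/4) * r⁻¹ ^ 2 * (g r) ^ 2
      + (a r + p) ^ 2 * (g r) ^ 2)

/-- The `n`-th min-max value `μ_{n,m}(p)`: the infimum, over `n`-dimensional subspaces `V` of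
`C_c^∞((0,∞))`, of the supremum of the Rayleigh quotient `l_m[g;p]/‖g‖²` over nonzero `g ∈ V`. -/
def muRadial (a : ℝ → ℝ) (m : ℤ) (n : ℕ) (p : ℝ) : ℝ :=
  sInf {S : ℝ | ∃ f : Fin n → (ℝ → ℝ), (∀ i, IsTestR (f i)) ∧ LinearIndependent ℝ f ∧
    S = sSup {R : ℝ | ∃ g : ℝ → ℝ, g ∈ Submodule.span ℝ (Set.range f) ∧ g ≠ 0 ∧
      R = lForm a m p g / ∫ r in Set.Ioi (0:ℝ), (g r) ^ 2}}

/-!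
For large `r` one has `a r = b₀ r + c`. Writing `k = b₀ ρ + c`, the potential `(a r - k)²` is
`b₀² (r - ρ)²` there, so near `r = ρ` the form `l_0[·;-k]` is that of a harmonic oscillator
perturbed by the attractive term `-1 / (4 r²)`. The trial functions are
`P(r - ρ) e^{-b₀ (r - ρ)² / 2}` with `P` a polynomial of degree `< n`, cut off between
`|r - ρ| = ε ρ` and `|r - ρ| = 2 ε ρ`. Their oscillator energy is at most `(2 n - 1) b₀ + O(ρ⁻⁴)`,
whereas `-1 / (4 r²) ≤ -1 / (4 (1 + 2 ε)² ρ²)` on their support. Since `k ~ b₀ ρ`, every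
`γ < b₀² / 4` is admissible once `ε` is small. A trial space bounds the min-max value because, by
Hardy's inequality, the set whose infimum is taken is bounded below.
-/

/-! ### Test functions and Hardy's inequality -/

section TestFunctions

variable {g h : ℝ → ℝ}

lemma isTestR_zero : IsTestR 0 :=
  ⟨contDiff_const, HasCompactSupport.zero, by simp [tsupport]⟩

protected lemma IsTestR.add (hg : IsTestR g) (hh : IsTestR h) : IsTestR (g + h) :=
  ⟨hg.1.add hh.1, hg.2.1.add hh.2.1, (tsupport_add g h).trans (union_subset hg.2.2 hh.2.2)⟩

protected lemma IsTestR.smul (c : ℝ) (hg : IsTestR g) : IsTestR (c • g) :=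
  ⟨hg.1.const_smul c, hg.2.1.smul_left (f := fun _ => c),
    (tsupport_smul_subset_right (fun _ => c) g).trans hg.2.2⟩

lemma isTestR_of_mem_span {s : Set (ℝ → ℝ)} (hs : ∀ f ∈ s, IsTestR f)
    (hg : g ∈ Submodule.span ℝ s) : IsTestR g := by
  induction hg using Submodule.span_induction with
  | mem f hf => exact hs f hf
  | zero => exact isTestR_zero
  | add f₁ f₂ _ _ h₁ h₂ => exact h₁.add h₂
  | smul c f _ hf => exact hf.smul c

lemma isTestR_of_support_subset_Icc {α β : ℝ} (hα : 0 < α) (hg : ContDiff ℝ (⊤ : ℕ∞) g)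
    (hsupp : Function.support g ⊆ Icc α β) : IsTestR g :=
  ⟨hg, HasCompactSupport.of_support_subset_isCompact isCompact_Icc hsupp,
    (closure_minimal hsupp isClosed_Icc).trans fun _ hr => hα.trans_le hr.1⟩

lemma IsTestR.eq_zero_of_nonpos (hg : IsTestR g) {r : ℝ} (hr : r ≤ 0) : g r = 0 :=
  image_eq_zero_of_notMem_tsupport fun hmem => (hg.2.2 hmem).not_ge hr

lemma IsTestR.setIntegral_Ioi (hg : IsTestR g) : ∫ r in Ioi (0 : ℝ), g r = ∫ r, g r :=
  setIntegral_eq_integral_of_forall_compl_eq_zero fun _ hr => hg.eq_zero_of_nonpos (not_lt.mp hr)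

protected lemma IsTestR.integrable (hg : IsTestR g) : Integrable g :=
  hg.1.continuous.integrable_of_hasCompactSupport hg.2.1

protected lemma IsTestR.deriv (hg : IsTestR g) : IsTestR (deriv g) :=
  ⟨contDiff_infty_iff_deriv.mp hg.1 |>.2, hg.2.1.deriv, tsupport_deriv_subset.trans hg.2.2⟩

lemma IsTestR.mul_left {w : ℝ → ℝ} (hw : ∀ r > 0, ContDiffAt ℝ (⊤ : ℕ∞) w r) (hg : IsTestR g) :
    IsTestR (fun r => w r * g r) := by
  refine ⟨contDiff_iff_contDiffAt.mpr fun r => ?_, hg.2.1.mul_left,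
    tsupport_mul_subset_right.trans hg.2.2⟩
  by_cases hr : r ∈ tsupport g
  · exact (hw r (hg.2.2 hr)).mul hg.1.contDiffAt
  · refine contDiffAt_const (c := (0 : ℝ)) |>.congr_of_eventuallyEq ?_
    filter_upwards [notMem_tsupport_iff_eventuallyEq.mp hr] with s hs
    rw [hs, Pi.zero_apply, mul_zero]

protected lemma IsTestR.sq (hg : IsTestR g) : IsTestR (fun r => g r ^ 2) := by
  simpa only [pow_two] using hg.mul_left fun _ _ => hg.1.contDiffAt

lemma IsTestR.inv_sq_mul_sq (hg : IsTestR g) : IsTestR (fun r => r⁻¹ ^ 2 * g r ^ 2) :=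
  hg.sq.mul_left fun _ hr => (contDiffAt_inv ℝ hr.ne').pow 2

lemma IsTestR.integral_sq_pos (hg : IsTestR g) (hg0 : g ≠ 0) :
    0 < ∫ r in Ioi (0 : ℝ), g r ^ 2 := by
  obtain ⟨r, hr⟩ := Function.ne_iff.mp hg0
  rw [hg.sq.setIntegral_Ioi]
  exact hg.sq.1.continuous.integral_pos_of_hasCompactSupport_nonneg_nonzero hg.sq.2.1
    (fun r => sq_nonneg (g r)) (pow_ne_zero 2 hr)

lemma IsTestR.integral_deriv_eq_zero (hg : IsTestR g) : ∫ r, deriv g r = 0 :=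
  integral_eq_zero_of_hasDerivAt_of_integrable
    (fun r => (hg.1.differentiable (by simp) r).hasDerivAt) hg.deriv.integrable hg.integrable

lemma IsTestR.hardy_inequality (hg : IsTestR g) :
    0 ≤ ∫ r in Ioi (0 : ℝ), (deriv g r ^ 2 - 1 / 4 * (r⁻¹ ^ 2 * g r ^ 2)) := by
  have hq : IsTestR (fun r => 2⁻¹ * r⁻¹ * g r ^ 2) :=
    hg.sq.mul_left fun _ hr => contDiffAt_const.mul (contDiffAt_inv ℝ hr.ne')
  have hint : IntegrableOn (fun r => deriv g r ^ 2 - 1 / 4 * (r⁻¹ ^ 2 * g r ^ 2)) (Ioi 0) :=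
    (hg.deriv.sq.integrable.sub (hg.inv_sq_mul_sq.integrable.const_mul _)).integrableOn
  have hderiv : ∀ r > 0, deriv (fun r => 2⁻¹ * r⁻¹ * g r ^ 2) r =
      2⁻¹ * -(r ^ 2)⁻¹ * g r ^ 2 + 2⁻¹ * r⁻¹ * (2 * g r * deriv g r) := fun r hr => by
    have hgr := (hg.1.differentiable (by simp) r).hasDerivAt.fun_pow 2
    simpa using (((hasDerivAt_inv hr.ne').const_mul 2⁻¹).fun_mul hgr).deriv
  calc
    0 = ∫ r in Ioi (0 : ℝ), deriv (fun r => 2⁻¹ * r⁻¹ * g r ^ 2) r := by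
      rw [hq.deriv.setIntegral_Ioi, hq.integral_deriv_eq_zero]
    _ ≤ _ := setIntegral_mono_on hq.deriv.integrable.integrableOn hint measurableSet_Ioi
      fun r hr => by
        -- `g'² - g² / (4 r²) - (g² / (2 r))' = (g' - g / (2 r))²`
        rw [hderiv r hr, ← sub_nonneg]
        convert sq_nonneg (deriv g r - g r / (2 * r)) using 1
        ring

end TestFunctions

/-! ### The min-max principle -/

section MinMax

variable {a : ℝ → ℝ} {m : ℤ} {n : ℕ} {p : ℝ}

lemma lForm_nonneg {g : ℝ → ℝ} (hg : IsTestR g) : 0 ≤ lForm a m p g := by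
  unfold lForm
  by_cases hint : IntegrableOn (fun r => deriv g r ^ 2 + ((m : ℝ) ^ 2 - 1 / 4) * r⁻¹ ^ 2 * g r ^ 2
      + (a r + p) ^ 2 * g r ^ 2) (Ioi 0)
  · refine hg.hardy_inequality.trans (setIntegral_mono_on ?_ hint measurableSet_Ioi fun r _ => ?_)
    · exact (hg.deriv.sq.integrable.sub (hg.inv_sq_mul_sq.integrable.const_mul _)).integrableOn
    · have hm : 0 ≤ (m : ℝ) ^ 2 * (r⁻¹ ^ 2 * g r ^ 2) := by positivity
      have ha : 0 ≤ (a r + p) ^ 2 * g r ^ 2 := by positivity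
      linarith
  -- Outside the form domain the Bochner integral is `0`.
  · rw [integral_undef hint]

/-- The values `sup {l_m[g;p] / ‖g‖² : g ∈ V, g ≠ 0}` over the `n`-dimensional spaces `V` of test
functions, i.e. the set whose infimum is `muRadial`. -/
def minMaxSet (a : ℝ → ℝ) (m : ℤ) (n : ℕ) (p : ℝ) : Set ℝ :=
  {S : ℝ | ∃ f : Fin n → (ℝ → ℝ), (∀ i, IsTestR (f i)) ∧ LinearIndependent ℝ f ∧
    S = sSup {R : ℝ | ∃ g : ℝ → ℝ, g ∈ Submodule.span ℝ (Set.range f) ∧ g ≠ 0 ∧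
      R = lForm a m p g / ∫ r in Set.Ioi (0 : ℝ), (g r) ^ 2}}

lemma bddBelow_minMaxSet : BddBelow (minMaxSet a m n p) := by
  refine ⟨0, ?_⟩
  rintro _ ⟨f, hf, -, rfl⟩
  refine Real.sSup_nonneg ?_
  rintro _ ⟨g, hg, -, rfl⟩
  exact div_nonneg (lForm_nonneg (isTestR_of_mem_span (forall_mem_range.mpr hf) hg))
    (integral_nonneg fun r => sq_nonneg (g r))

lemma muRadial_le_of_injective {V : Type*} [AddCommGroup V] [Module ℝ V]
    (β : Module.Basis (Fin n) ℝ V) (hn : 1 ≤ n) {T : V →ₗ[ℝ] ℝ → ℝ}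
    (hinj : Function.Injective T) (htest : ∀ v, IsTestR (T v))
    {S : ℝ} (hle : ∀ v, lForm a m p (T v) ≤ S * ∫ r in Ioi (0 : ℝ), T v r ^ 2) :
    muRadial a m n p ≤ S := by
  have hli : LinearIndependent ℝ (T ∘ β) :=
    β.linearIndependent.map' T (LinearMap.ker_eq_bot.mpr hinj)
  refine (csInf_le bddBelow_minMaxSet ⟨T ∘ β, fun i => htest _, hli, rfl⟩).trans ?_
  refine csSup_le ⟨_, _, Submodule.subset_span (mem_range_self ⟨0, hn⟩), hli.ne_zero _, rfl⟩ ?_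
  rintro _ ⟨g, hg, hg0, rfl⟩
  obtain ⟨v, rfl⟩ : g ∈ LinearMap.range T :=
    Submodule.span_le.mpr (range_comp_subset_range β T) hg
  exact (div_le_iff₀ ((htest v).integral_sq_pos hg0)).mpr (hle v)

end MinMax

/-! ### Polynomials in the Gaussian-weighted `L²` space -/

section GaussianIntegral

open Polynomial

lemma integrable_eval_mul_exp_neg_mul_sq {b : ℝ} (hb : 0 < b) (P : ℝ[X]) :
    Integrable (fun x : ℝ => P.eval x * Real.exp (-b * x ^ 2)) := by
  induction P using Polynomial.induction_on' with
  | add P Q hP hQ => simpa only [eval_add, add_mul] using! hP.add hQ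
  | monomial n c =>
    have hn : (-1 : ℝ) < n := by linarith [n.cast_nonneg (α := ℝ)]
    simpa [mul_assoc] using (integrable_rpow_mul_exp_neg_mul_sq hb hn).const_mul c

/-- The Gaussian functional `P ↦ ∫ P(x) e^{-b x²} dx` on polynomials. The squared weighted `L²` norm
of `P` is its value at `P ^ 2`. -/
def gaussianIntegral {b : ℝ} (hb : 0 < b) : ℝ[X] →ₗ[ℝ] ℝ where
  toFun P := ∫ x : ℝ, P.eval x * Real.exp (-b * x ^ 2)
  map_add' P Q := by
    simp only [eval_add, add_mul]
    exact integral_add (integrable_eval_mul_exp_neg_mul_sq hb P)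
      (integrable_eval_mul_exp_neg_mul_sq hb Q)
  map_smul' c P := by
    simp only [eval_smul, smul_eq_mul, mul_assoc, integral_const_mul, RingHom.id_apply]

/-- The Ornstein–Uhlenbeck operator `P ↦ 2 b x P' - P''`, symmetric for the weight `e^{-b x²}`; its
eigenvalue on the `d`-th Hermite polynomial is `2 b d`. -/
def ornsteinUhlenbeck (b : ℝ) (P : ℝ[X]) : ℝ[X] :=
  (2 * b) • (X * derivative P) - derivative (derivative P)

/-- The polynomial `P' - b x P` with `(P e^{-b x² / 2})' = (P' - b x P) e^{-b x² / 2}`. -/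
def gaussianDeriv (b : ℝ) (P : ℝ[X]) : ℝ[X] := derivative P - b • (X * P)

variable {b : ℝ} (hb : 0 < b)

lemma gaussianIntegral_sq_nonneg (P : ℝ[X]) : 0 ≤ gaussianIntegral hb (P ^ 2) :=
  integral_nonneg fun x => by simp only [eval_pow]; positivity

lemma gaussianIntegral_derivative (P : ℝ[X]) :
    gaussianIntegral hb (derivative P) = 2 * b * gaussianIntegral hb (X * P) := by
  suffices gaussianIntegral hb (derivative P - (2 * b) • (X * P)) = 0 by
    rwa [map_sub, map_smul, smul_eq_mul, sub_eq_zero] at this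
  refine integral_eq_zero_of_hasDerivAt_of_integrable (fun x => ?_)
    (integrable_eval_mul_exp_neg_mul_sq hb _) (integrable_eval_mul_exp_neg_mul_sq hb P)
  refine ((P.hasDerivAt x).fun_mul ((hasDerivAt_pow 2 x).const_mul (-b)).exp).congr_deriv ?_
  simp only [eval_sub, eval_smul, eval_mul, eval_X, smul_eq_mul]
  ring

lemma gaussianIntegral_derivative_mul_derivative (P Q : ℝ[X]) :
    gaussianIntegral hb (derivative P * derivative Q) =
      gaussianIntegral hb (Q * ornsteinUhlenbeck b P) := by
  have hparts := gaussianIntegral_derivative hb (derivative P * Q)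
  have hexpand : Q * ornsteinUhlenbeck b P =
      (2 * b) • (X * (derivative P * Q)) - derivative (derivative P) * Q := by
    simp only [ornsteinUhlenbeck, smul_eq_C_mul]
    ring
  rw [derivative_mul, map_add] at hparts
  rw [hexpand, map_sub, map_smul, smul_eq_mul]
  linarith

lemma derivative_ornsteinUhlenbeck (P : ℝ[X]) :
    derivative (ornsteinUhlenbeck b P) =
      (2 * b) • derivative P + ornsteinUhlenbeck b (derivative P) := by
  simp only [ornsteinUhlenbeck, derivative_sub, derivative_smul, derivative_mul, derivative_X,
    one_mul, smul_add, add_sub_assoc]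

lemma gaussianIntegral_ornsteinUhlenbeck_sq (P : ℝ[X]) :
    gaussianIntegral hb (ornsteinUhlenbeck b P ^ 2) =
      2 * b * gaussianIntegral hb (derivative P ^ 2) +
        gaussianIntegral hb (derivative (derivative P) ^ 2) := by
  rw [sq, ← gaussianIntegral_derivative_mul_derivative, derivative_ornsteinUhlenbeck, mul_add,
    mul_smul_comm, map_add, map_smul, ← gaussianIntegral_derivative_mul_derivative, smul_eq_mul,
    ← sq, ← sq]

lemma gaussianIntegral_derivative_sq_le (d : ℕ) {P : ℝ[X]} (hP : P.natDegree ≤ d) :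
    gaussianIntegral hb (derivative P ^ 2) ≤ 2 * b * d * gaussianIntegral hb (P ^ 2) := by
  induction d generalizing P with
  | zero =>
    rw [derivative_of_natDegree_zero (by lia)]
    simp
  | succ d ih =>
    have hderiv : gaussianIntegral hb (derivative (derivative P) ^ 2) ≤
        2 * b * d * gaussianIntegral hb (derivative P ^ 2) :=
      ih ((natDegree_derivative_le P).trans (by lia))
    set t : ℝ := 2 * b * (d + 1 : ℕ) with ht
    have hpos : 0 < t := by positivity
    -- `t` is the top eigenvalue of `L = ornsteinUhlenbeck b` in degree `≤ d + 1`. In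
    -- `∫ (L P - t P)² e^{-b x²} ≥ 0` the induction hypothesis for `P'` bounds `∫ (L P)² e^{-b x²}`.
    have hsq := gaussianIntegral_sq_nonneg hb (ornsteinUhlenbeck b P - t • P)
    have hexpand : (ornsteinUhlenbeck b P - t • P) ^ 2 =
        ornsteinUhlenbeck b P ^ 2 - (2 * t) • (P * ornsteinUhlenbeck b P) + t ^ 2 • P ^ 2 := by
      simp only [smul_eq_C_mul, C_mul, C_pow, C_ofNat]
      ring
    rw [hexpand, map_add, map_sub, map_smul, map_smul, gaussianIntegral_ornsteinUhlenbeck_sq,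
      ← gaussianIntegral_derivative_mul_derivative, ← sq, smul_eq_mul, smul_eq_mul] at hsq
    refine le_of_mul_le_mul_left ?_ hpos
    push_cast at ht
    calc t * gaussianIntegral hb (derivative P ^ 2)
        = 2 * t * gaussianIntegral hb (derivative P ^ 2) - (2 * b + 2 * b * d) *
          gaussianIntegral hb (derivative P ^ 2) := by rw [ht]; ring
      _ ≤ t * (t * gaussianIntegral hb (P ^ 2)) := by linarith

lemma gaussianIntegral_energy_eq (P : ℝ[X]) :
    gaussianIntegral hb (gaussianDeriv b P ^ 2) + b ^ 2 * gaussianIntegral hb ((X * P) ^ 2) =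
      gaussianIntegral hb (derivative P ^ 2) + b * gaussianIntegral hb (P ^ 2) := by
  have hexpand : gaussianDeriv b P ^ 2 + b ^ 2 • (X * P) ^ 2 =
      derivative P ^ 2 + b • P ^ 2
        - b • (derivative (X * P ^ 2) - (2 * b) • (X * (X * P ^ 2))) := by
    simp only [gaussianDeriv, smul_eq_C_mul, C_mul, C_pow, C_ofNat, derivative_mul, derivative_X,
      derivative_sq]
    ring
  have hintegral := congrArg (gaussianIntegral hb) hexpand
  simp only [map_add, map_sub, map_smul, smul_eq_mul, gaussianIntegral_derivative] at hintegral
  rw [hintegral, sub_self, mul_zero, sub_zero]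

lemma gaussianIntegral_energy_le {d : ℕ} {P : ℝ[X]} (hP : P.natDegree ≤ d) :
    gaussianIntegral hb (gaussianDeriv b P ^ 2) + b ^ 2 * gaussianIntegral hb ((X * P) ^ 2) ≤
      (2 * d + 1) * b * gaussianIntegral hb (P ^ 2) := by
  rw [gaussianIntegral_energy_eq]
  linarith [gaussianIntegral_derivative_sq_le hb d hP]

lemma gaussianIntegral_gaussianDeriv_sq_le {d : ℕ} {P : ℝ[X]} (hP : P.natDegree ≤ d) :
    gaussianIntegral hb (gaussianDeriv b P ^ 2) ≤
      (2 * d + 1) * b * gaussianIntegral hb (P ^ 2) :=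
  (le_add_of_nonneg_right (mul_nonneg (sq_nonneg b) (gaussianIntegral_sq_nonneg hb _))).trans
    (gaussianIntegral_energy_le hb hP)

lemma gaussianIntegral_X_mul_sq_le {d : ℕ} {P : ℝ[X]} (hP : P.natDegree ≤ d) :
    gaussianIntegral hb ((X * P) ^ 2) ≤ (2 * d + 1) / b * gaussianIntegral hb (P ^ 2) := by
  have henergy := gaussianIntegral_energy_le hb hP
  have hnonneg := gaussianIntegral_sq_nonneg hb (gaussianDeriv b P)
  refine le_of_mul_le_mul_left ?_ (pow_pos hb 2)
  calc b ^ 2 * gaussianIntegral hb ((X * P) ^ 2)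
      ≤ (2 * d + 1) * b * gaussianIntegral hb (P ^ 2) := by linarith
    _ = b ^ 2 * ((2 * d + 1) / b * gaussianIntegral hb (P ^ 2)) := by field_simp

lemma gaussianIntegral_X_sq_mul_sq_le {d : ℕ} {P : ℝ[X]} (hP : P.natDegree ≤ d) :
    gaussianIntegral hb ((X ^ 2 * P) ^ 2) ≤
      (2 * d + 3) / b * ((2 * d + 1) / b) * gaussianIntegral hb (P ^ 2) := by
  have hdeg : (X * P).natDegree ≤ d + 1 :=
    natDegree_mul_le.trans (by linarith [natDegree_X_le (R := ℝ)])
  calc gaussianIntegral hb ((X ^ 2 * P) ^ 2)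
      = gaussianIntegral hb ((X * (X * P)) ^ 2) := by rw [sq X, mul_assoc]
    _ ≤ (2 * (d + 1 : ℕ) + 1) / b * gaussianIntegral hb ((X * P) ^ 2) :=
      gaussianIntegral_X_mul_sq_le hb hdeg
    _ ≤ (2 * (d + 1 : ℕ) + 1) / b * ((2 * d + 1) / b * gaussianIntegral hb (P ^ 2)) := by
      gcongr
      exact gaussianIntegral_X_mul_sq_le hb hP
    _ = _ := by push_cast; ring

lemma natDegree_gaussianDeriv_le (b : ℝ) (P : ℝ[X]) :
    (gaussianDeriv b P).natDegree ≤ P.natDegree + 1 := by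
  refine (natDegree_sub_le _ _).trans (max_le ((natDegree_derivative_le P).trans (by lia)) ?_)
  refine (natDegree_smul_le _ _).trans (natDegree_mul_le.trans ?_)
  linarith [natDegree_X_le (R := ℝ)]

lemma exists_gaussianIntegral_fourth_moment_le (d : ℕ) : ∃ D > 0, ∀ P : ℝ[X], P.natDegree ≤ d →
    gaussianIntegral hb ((X ^ 2 * P) ^ 2) + gaussianIntegral hb ((X ^ 2 * gaussianDeriv b P) ^ 2) ≤
      D * gaussianIntegral hb (P ^ 2) := by
  let κ : ℕ → ℝ := fun e => (2 * e + 3) / b * ((2 * e + 1) / b)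
  have hκ : ∀ e, 0 < κ e := fun e => by positivity
  refine ⟨κ d + κ (d + 1) * ((2 * d + 1) * b), by have := hκ d; have := hκ (d + 1); positivity,
    fun P hP => ?_⟩
  calc _ ≤ κ d * gaussianIntegral hb (P ^ 2) +
        κ (d + 1) * gaussianIntegral hb (gaussianDeriv b P ^ 2) :=
      add_le_add (gaussianIntegral_X_sq_mul_sq_le hb hP)
        (gaussianIntegral_X_sq_mul_sq_le hb ((natDegree_gaussianDeriv_le b P).trans (by lia)))
    _ ≤ κ d * gaussianIntegral hb (P ^ 2) +
        κ (d + 1) * ((2 * d + 1) * b * gaussianIntegral hb (P ^ 2)) := by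
      gcongr
      exact gaussianIntegral_gaussianDeriv_sq_le hb hP
    _ = _ := by ring

end GaussianIntegral

/-! ### Truncated oscillator functions -/

section Cutoff

/-- A smooth cutoff on `ℝ`, equal to `1` on `[-1, 1]` and supported in `[-2, 2]`. -/
def cutoff : ContDiffBump (0 : ℝ) := ⟨1, 2, one_pos, one_lt_two⟩

lemma cutoff_eq_one {t : ℝ} (ht : |t| ≤ 1) : cutoff t = 1 :=
  cutoff.one_of_mem_closedBall (by simpa [cutoff] using ht)

lemma cutoff_eq_zero {t : ℝ} (ht : 2 ≤ |t|) : cutoff t = 0 :=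
  cutoff.zero_of_le_dist (by simpa [cutoff] using ht)

lemma deriv_cutoff_eq_zero {t : ℝ} (ht : |t| < 1) : deriv cutoff t = 0 := by
  rw [(cutoff.eventuallyEq_one_of_mem_ball (by simpa [cutoff] using ht)).deriv_eq]
  exact deriv_const t 1

lemma exists_abs_deriv_cutoff_le : ∃ M, ∀ t, |deriv cutoff t| ≤ M :=
  (cutoff.contDiff.continuous_deriv le_rfl).bounded_above_of_compact_support
    cutoff.hasCompactSupport.deriv

lemma cutoff_sq_le_one (t : ℝ) : cutoff t ^ 2 ≤ 1 := pow_le_one₀ cutoff.nonneg cutoff.le_one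

lemma one_le_pow_four_of_one_le_abs {t : ℝ} (ht : 1 ≤ |t|) : 1 ≤ t ^ 4 := by
  rw [← Even.pow_abs (by decide)]
  exact one_le_pow₀ ht

lemma one_sub_pow_four_le_cutoff_sq (t : ℝ) : 1 - t ^ 4 ≤ cutoff t ^ 2 := by
  rcases le_total |t| 1 with ht | ht
  · rw [cutoff_eq_one ht, one_pow]
    exact sub_le_self 1 (by positivity)
  · exact (sub_nonpos.mpr (one_le_pow_four_of_one_le_abs ht)).trans (sq_nonneg _)

lemma exists_cutoff_product_rule_sq_le : ∃ K ≥ 0, ∀ t u v : ℝ,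
    (deriv cutoff t * u + cutoff t * v) ^ 2 ≤ v ^ 2 + K * t ^ 4 * (u ^ 2 + v ^ 2) := by
  obtain ⟨M, hM⟩ := exists_abs_deriv_cutoff_le
  refine ⟨2 * (M ^ 2 + 1), by positivity, fun t u v => ?_⟩
  rcases lt_or_ge |t| 1 with ht | ht
  · rw [deriv_cutoff_eq_zero ht, cutoff_eq_one ht.le, zero_mul, zero_add, one_mul]
    exact le_add_of_nonneg_right (by positivity)
  have hderiv : deriv cutoff t ^ 2 ≤ M ^ 2 := sq_le_sq' (abs_le.mp (hM t)).1 (abs_le.mp (hM t)).2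
  calc (deriv cutoff t * u + cutoff t * v) ^ 2
      ≤ 2 * ((deriv cutoff t * u) ^ 2 + (cutoff t * v) ^ 2) := add_sq_le
    _ = 2 * (deriv cutoff t ^ 2 * u ^ 2 + cutoff t ^ 2 * v ^ 2) := by ring
    _ ≤ 2 * (M ^ 2 * u ^ 2 + 1 * v ^ 2) := by
      gcongr
      exact cutoff_sq_le_one t
    _ ≤ 2 * ((M ^ 2 + 1) * u ^ 2 + (M ^ 2 + 1) * v ^ 2) := by
      gcongr <;> linarith [sq_nonneg M]
    _ = 2 * (M ^ 2 + 1) * 1 * (u ^ 2 + v ^ 2) := by ring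
    _ ≤ 2 * (M ^ 2 + 1) * t ^ 4 * (u ^ 2 + v ^ 2) := by
      gcongr
      exact one_le_pow_four_of_one_le_abs ht
    _ ≤ v ^ 2 + 2 * (M ^ 2 + 1) * t ^ 4 * (u ^ 2 + v ^ 2) := le_add_of_nonneg_left (sq_nonneg v)

end Cutoff

section TruncatedGaussian

open Polynomial

/-- The function `x ↦ P(x) e^{-b x² / 2}`. For `P` of degree `< n` these span the first `n`
eigenspaces of the harmonic oscillator `-d²/dx² + b² x²`. -/
def gaussianFun (b : ℝ) : ℝ[X] →ₗ[ℝ] ℝ → ℝ where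
  toFun P x := P.eval x * Real.exp (-(b / 2) * x ^ 2)
  map_add' P Q := by ext x; simp only [eval_add, add_mul, Pi.add_apply]
  map_smul' c P := by
    ext x; simp only [eval_smul, smul_eq_mul, mul_assoc, Pi.smul_apply, RingHom.id_apply]

/-- `gaussianFun b P` cut off to `[-2R, 2R]`, and unchanged on `[-R, R]`. -/
def truncatedGaussian (b R : ℝ) : ℝ[X] →ₗ[ℝ] ℝ → ℝ :=
  LinearMap.mulLeft ℝ (fun x => cutoff (x / R)) ∘ₗ gaussianFun b

/-- The quadratic form `∫ (|g'|² + b² x² |g|²)` of the harmonic oscillator on the line. -/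
def oscillatorForm (b : ℝ) (g : ℝ → ℝ) : ℝ := ∫ x, (deriv g x ^ 2 + b ^ 2 * x ^ 2 * g x ^ 2)

variable {b R : ℝ}

lemma gaussianFun_apply (b : ℝ) (P : ℝ[X]) (x : ℝ) :
    gaussianFun b P x = P.eval x * Real.exp (-(b / 2) * x ^ 2) := rfl

lemma truncatedGaussian_apply (b R : ℝ) (P : ℝ[X]) (x : ℝ) :
    truncatedGaussian b R P x = cutoff (x / R) * gaussianFun b P x := rfl

lemma gaussianFun_X_pow_mul (b : ℝ) (j : ℕ) (P : ℝ[X]) (x : ℝ) :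
    gaussianFun b (X ^ j * P) x = x ^ j * gaussianFun b P x := by
  simp only [gaussianFun_apply, eval_mul, eval_pow, eval_X, mul_assoc]

lemma gaussianFun_sq (b : ℝ) (P : ℝ[X]) (x : ℝ) :
    gaussianFun b P x ^ 2 = (P ^ 2).eval x * Real.exp (-b * x ^ 2) := by
  rw [gaussianFun_apply, mul_pow, ← Real.exp_nat_mul, eval_pow]
  congr 2
  push_cast
  ring

lemma integrable_gaussianFun_sq (hb : 0 < b) (P : ℝ[X]) :
    Integrable (fun x => gaussianFun b P x ^ 2) := by
  simpa only [gaussianFun_sq] using integrable_eval_mul_exp_neg_mul_sq hb (P ^ 2)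

lemma integral_gaussianFun_sq (hb : 0 < b) (P : ℝ[X]) :
    ∫ x, gaussianFun b P x ^ 2 = gaussianIntegral hb (P ^ 2) := by
  simp only [gaussianFun_sq]
  rfl

lemma contDiff_gaussianFun (b : ℝ) (P : ℝ[X]) : ContDiff ℝ (⊤ : ℕ∞) (gaussianFun b P) := by
  have hP : ContDiff ℝ (⊤ : ℕ∞) (fun x : ℝ => P.eval x) := by
    simpa using P.contDiff_aeval (𝕜 := ℝ) (⊤ : ℕ∞)
  exact hP.mul (by fun_prop)

lemma contDiff_truncatedGaussian (b R : ℝ) (P : ℝ[X]) :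
    ContDiff ℝ (⊤ : ℕ∞) (truncatedGaussian b R P) :=
  (cutoff.contDiff.comp (contDiff_id.div_const R)).mul (contDiff_gaussianFun b P)

lemma hasDerivAt_gaussianFun (b : ℝ) (P : ℝ[X]) (x : ℝ) :
    HasDerivAt (gaussianFun b P) (gaussianFun b (gaussianDeriv b P) x) x := by
  refine ((P.hasDerivAt x).fun_mul
    ((hasDerivAt_pow 2 x).const_mul (-(b / 2))).exp).congr_deriv ?_
  simp only [gaussianFun_apply, gaussianDeriv, eval_sub, eval_smul, eval_mul, eval_X, smul_eq_mul]
  ring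

lemma deriv_truncatedGaussian (b R : ℝ) (P : ℝ[X]) (x : ℝ) :
    deriv (truncatedGaussian b R P) x = deriv cutoff (x / R) * (gaussianFun b P x / R) +
      cutoff (x / R) * gaussianFun b (gaussianDeriv b P) x := by
  have hcutoff : HasDerivAt cutoff (deriv cutoff (x / R)) (x / R) :=
    (cutoff.contDiff.differentiable one_ne_zero _).hasDerivAt
  have hscaled := hcutoff.comp x ((hasDerivAt_id x).div_const R)
  refine (hscaled.mul (hasDerivAt_gaussianFun b P x)).deriv.trans ?_
  simp only [Function.comp_apply, id]
  ring

lemma support_truncatedGaussian_subset (b : ℝ) (hR : 0 < R) (P : ℝ[X]) :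
    Function.support (truncatedGaussian b R P) ⊆ Icc (-(2 * R)) (2 * R) := by
  intro x hx
  by_contra hmem
  rw [mem_Icc, ← abs_le, not_le] at hmem
  refine hx ?_
  rw [truncatedGaussian_apply, cutoff_eq_zero, zero_mul]
  rw [abs_div, abs_of_pos hR]
  exact ((lt_div_iff₀ hR).mpr hmem).le

lemma truncatedGaussian_injective (b : ℝ) (hR : 0 < R) :
    Function.Injective (truncatedGaussian b R) := by
  refine (injective_iff_map_eq_zero _).mpr fun P hP => ?_
  refine P.eq_zero_of_infinite_isRoot ((Ioo_infinite hR).mono fun x hx => ?_)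
  have hcut : cutoff (x / R) = 1 := cutoff_eq_one <| by
    rw [abs_of_pos (div_pos hx.1 hR)]
    exact div_le_one_of_le₀ hx.2.le hR.le
  have hx0 := congrFun hP x
  rw [truncatedGaussian_apply, hcut, one_mul, gaussianFun_apply, Pi.zero_apply] at hx0
  exact (mul_eq_zero.mp hx0).resolve_right (Real.exp_ne_zero _)

lemma integrable_truncatedGaussian_sq (b : ℝ) (hR : 0 < R) (P : ℝ[X]) :
    Integrable (fun x => truncatedGaussian b R P x ^ 2) := by
  have hcont := (contDiff_truncatedGaussian b R P).continuous
  refine (hcont.pow 2).integrable_of_hasCompactSupport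
    (HasCompactSupport.of_support_subset_isCompact isCompact_Icc
      (Subset.trans ?_ (support_truncatedGaussian_subset b hR P)))
  exact fun x hx hx0 => hx (by simp [hx0])

lemma sub_le_integral_truncatedGaussian_sq (hb : 0 < b) (hR : 0 < R) (P : ℝ[X]) :
    gaussianIntegral hb (P ^ 2) - gaussianIntegral hb ((X ^ 2 * P) ^ 2) / R ^ 4 ≤
      ∫ x, truncatedGaussian b R P x ^ 2 := by
  rw [← integral_gaussianFun_sq, ← integral_gaussianFun_sq, ← integral_div,
    ← integral_sub (integrable_gaussianFun_sq hb P) ((integrable_gaussianFun_sq hb _).div_const _)]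
  refine integral_mono ((integrable_gaussianFun_sq hb P).sub
    ((integrable_gaussianFun_sq hb _).div_const _)) (integrable_truncatedGaussian_sq b hR P)
    fun x => ?_
  calc gaussianFun b P x ^ 2 - gaussianFun b (X ^ 2 * P) x ^ 2 / R ^ 4
      = (1 - (x / R) ^ 4) * gaussianFun b P x ^ 2 := by rw [gaussianFun_X_pow_mul]; ring
    _ ≤ cutoff (x / R) ^ 2 * gaussianFun b P x ^ 2 := by
      gcongr
      exact one_sub_pow_four_le_cutoff_sq _
    _ = truncatedGaussian b R P x ^ 2 := by rw [truncatedGaussian_apply, mul_pow]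

lemma exists_truncatedGaussian_energy_density_le (b : ℝ) :
    ∃ K ≥ 0, ∀ R ≥ 1, ∀ (P : ℝ[X]) (x : ℝ),
      deriv (truncatedGaussian b R P) x ^ 2 + b ^ 2 * x ^ 2 * truncatedGaussian b R P x ^ 2 ≤
        gaussianFun b (gaussianDeriv b P) x ^ 2 + b ^ 2 * gaussianFun b (X * P) x ^ 2 +
        K / R ^ 4 * (gaussianFun b (X ^ 2 * P) x ^ 2 +
          gaussianFun b (X ^ 2 * gaussianDeriv b P) x ^ 2) := by
  obtain ⟨K, hK, hcutoff⟩ := exists_cutoff_product_rule_sq_le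
  refine ⟨K, hK, fun R hR P x => ?_⟩
  have hsq : truncatedGaussian b R P x ^ 2 ≤ gaussianFun b P x ^ 2 := by
    rw [truncatedGaussian_apply, mul_pow]
    exact mul_le_of_le_one_left (sq_nonneg _) (cutoff_sq_le_one _)
  have hscale : (gaussianFun b P x / R) ^ 2 ≤ gaussianFun b P x ^ 2 := by
    rw [div_pow]
    exact div_le_self (sq_nonneg _) (one_le_pow₀ hR)
  have hX : gaussianFun b (X * P) x = x * gaussianFun b P x := by
    simpa using gaussianFun_X_pow_mul b 1 P x
  calc deriv (truncatedGaussian b R P) x ^ 2 + b ^ 2 * x ^ 2 * truncatedGaussian b R P x ^ 2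
      ≤ gaussianFun b (gaussianDeriv b P) x ^ 2 + K * (x / R) ^ 4 *
          ((gaussianFun b P x / R) ^ 2 + gaussianFun b (gaussianDeriv b P) x ^ 2) +
          b ^ 2 * x ^ 2 * gaussianFun b P x ^ 2 := by
        rw [deriv_truncatedGaussian]
        gcongr
        exact hcutoff _ _ _
    _ ≤ gaussianFun b (gaussianDeriv b P) x ^ 2 + K * (x / R) ^ 4 *
          (gaussianFun b P x ^ 2 + gaussianFun b (gaussianDeriv b P) x ^ 2) +
          b ^ 2 * x ^ 2 * gaussianFun b P x ^ 2 := by gcongr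
    _ = _ := by
      rw [gaussianFun_X_pow_mul, gaussianFun_X_pow_mul, hX]
      ring

lemma exists_oscillatorForm_truncatedGaussian_le_add (hb : 0 < b) : ∃ K ≥ 0, ∀ R ≥ 1, ∀ P : ℝ[X],
    oscillatorForm b (truncatedGaussian b R P) ≤
      gaussianIntegral hb (gaussianDeriv b P ^ 2) + b ^ 2 * gaussianIntegral hb ((X * P) ^ 2) +
      K / R ^ 4 * (gaussianIntegral hb ((X ^ 2 * P) ^ 2) +
        gaussianIntegral hb ((X ^ 2 * gaussianDeriv b P) ^ 2)) := by
  obtain ⟨K, hK, hdensity⟩ := exists_truncatedGaussian_energy_density_le b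
  refine ⟨K, hK, fun R hR P => ?_⟩
  have hint := integrable_gaussianFun_sq hb
  have hmain := (hint (gaussianDeriv b P)).fun_add ((hint (X * P)).const_mul (b ^ 2))
  have hrem := ((hint (X ^ 2 * P)).fun_add (hint (X ^ 2 * gaussianDeriv b P))).const_mul (K / R ^ 4)
  simp only [← integral_gaussianFun_sq]
  rw [← integral_const_mul, ← integral_add (hint _) ((hint _).const_mul _),
    ← integral_add (hint _) (hint _), ← integral_const_mul, ← integral_add hmain hrem]
  exact integral_mono_of_nonneg (.of_forall fun x => by positivity) (hmain.add hrem)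
    (.of_forall fun x => hdensity R hR P x)

lemma exists_oscillatorForm_truncatedGaussian_le (hb : 0 < b) (d : ℕ) :
    ∃ C : ℝ, ∀ᶠ R in atTop, ∀ P : ℝ[X], P.natDegree ≤ d →
      oscillatorForm b (truncatedGaussian b R P) ≤
        ((2 * d + 1) * b + C / R ^ 4) * ∫ x, truncatedGaussian b R P x ^ 2 := by
  obtain ⟨K, hK, hform⟩ := exists_oscillatorForm_truncatedGaussian_le_add hb
  obtain ⟨D, hD, hmoment⟩ := exists_gaussianIntegral_fourth_moment_le hb d
  set E : ℝ := (2 * d + 1) * b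
  refine ⟨2 * D * (E + K), ?_⟩
  have hlarge : ∀ᶠ R : ℝ in atTop, D / R ^ 4 ≤ 1 / 2 :=
    ((tendsto_pow_atTop four_ne_zero).const_div_atTop D).eventually_le_const (by norm_num)
  filter_upwards [hlarge, eventually_ge_atTop 1] with R hDR hR P hP
  have hpos : 0 < R := zero_lt_one.trans_le hR
  have henergy := gaussianIntegral_energy_le hb hP
  have hlower := sub_le_integral_truncatedGaussian_sq hb hpos P
  set J := gaussianIntegral hb (P ^ 2)
  set N := ∫ x, truncatedGaussian b R P x ^ 2
  have hJN : J - D / R ^ 4 * J ≤ N := by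
    refine (sub_le_sub_left ?_ J).trans hlower
    rw [div_mul_eq_mul_div]
    gcongr
    exact (le_add_of_nonneg_right (gaussianIntegral_sq_nonneg hb _)).trans (hmoment P hP)
  have hJ : 0 ≤ J := gaussianIntegral_sq_nonneg hb P
  have hJ2N : J ≤ 2 * N := by linarith [mul_le_mul_of_nonneg_right hDR hJ]
  calc oscillatorForm b (truncatedGaussian b R P)
      ≤ E * J + K / R ^ 4 * (D * J) :=
        (hform R hR P).trans (add_le_add henergy (by gcongr; exact hmoment P hP))
    _ ≤ E * (N + D / R ^ 4 * J) + K / R ^ 4 * (D * J) := by gcongr; linarith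
    _ = E * N + D * (E + K) / R ^ 4 * J := by ring
    _ ≤ E * N + D * (E + K) / R ^ 4 * (2 * N) := by gcongr
    _ = (E + 2 * D * (E + K) / R ^ 4) * N := by ring

end TruncatedGaussian

/-! ### Comparison with the harmonic oscillator -/

section ShiftedOscillator

variable {a g : ℝ → ℝ} {b c ρ s : ℝ}

lemma isTestR_comp_sub (hg : ContDiff ℝ (⊤ : ℕ∞) g) (hsupp : Function.support g ⊆ Icc (-s) s)
    (hs : s < ρ) : IsTestR (fun r => g (r - ρ)) := by
  refine isTestR_of_support_subset_Icc (α := ρ - s) (β := ρ + s) (sub_pos.mpr hs) (by fun_prop)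
    fun r hr => ?_
  obtain ⟨hlower, hupper⟩ := hsupp hr
  exact ⟨by linarith, by linarith⟩

lemma setIntegral_comp_sub_sq (hg : ContDiff ℝ (⊤ : ℕ∞) g)
    (hsupp : Function.support g ⊆ Icc (-s) s) (hs : s < ρ) :
    ∫ r in Ioi (0 : ℝ), g (r - ρ) ^ 2 = ∫ x, g x ^ 2 := by
  rw [(isTestR_comp_sub hg hsupp hs).sq.setIntegral_Ioi,
    integral_sub_right_eq_self (fun x => g x ^ 2) ρ]

lemma lForm_comp_sub_eq (hsupp : Function.support g ⊆ Icc (-s) s)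
    (ha : ∀ r ≥ ρ - s, a r = b * r + c) :
    lForm a 0 (-(b * ρ + c)) (fun r => g (r - ρ)) =
      ∫ r in Ioi (0 : ℝ), (deriv g (r - ρ) ^ 2 + b ^ 2 * (r - ρ) ^ 2 * g (r - ρ) ^ 2 -
        1 / 4 * (r⁻¹ ^ 2 * g (r - ρ) ^ 2)) := by
  refine setIntegral_congr_fun measurableSet_Ioi fun r _ => ?_
  have hpotential : (a r + -(b * ρ + c)) ^ 2 * g (r - ρ) ^ 2 =
      b ^ 2 * (r - ρ) ^ 2 * g (r - ρ) ^ 2 := by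
    by_cases hr : g (r - ρ) = 0
    · simp [hr]
    · rw [ha r (by linarith [(hsupp hr).1])]
      ring
  simp only [deriv_comp_sub_const, hpotential, Int.cast_zero]
  ring

lemma lForm_comp_sub_le (hg : ContDiff ℝ (⊤ : ℕ∞) g) (hsupp : Function.support g ⊆ Icc (-s) s)
    (hs : s < ρ) (ha : ∀ r ≥ ρ - s, a r = b * r + c) :
    lForm a 0 (-(b * ρ + c)) (fun r => g (r - ρ)) ≤
      oscillatorForm b g - 1 / (4 * (ρ + s) ^ 2) * ∫ x, g x ^ 2 := by
  have hf := isTestR_comp_sub hg hsupp hs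
  have hdensity : IsTestR
      (fun r => deriv g (r - ρ) ^ 2 + b ^ 2 * (r - ρ) ^ 2 * g (r - ρ) ^ 2) := by
    have hderiv := hf.deriv.sq
    simp only [deriv_comp_sub_const] at hderiv
    exact hderiv.add (hf.sq.mul_left fun _ _ => by fun_prop)
  have hcentrifugal : ∀ r ∈ Ioi (0 : ℝ), 1 / (4 * (ρ + s) ^ 2) * g (r - ρ) ^ 2 ≤
      1 / 4 * (r⁻¹ ^ 2 * g (r - ρ) ^ 2) := fun r (hr : 0 < r) => by
    by_cases hgr : g (r - ρ) = 0
    · simp [hgr]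
    · have hrs : r ≤ ρ + s := by linarith [(hsupp hgr).2]
      have hpos : 0 < ρ + s := hr.trans_le hrs
      rw [← mul_assoc, one_div, one_div, mul_inv, ← inv_pow]
      gcongr
  calc lForm a 0 (-(b * ρ + c)) (fun r => g (r - ρ))
      ≤ ∫ r in Ioi (0 : ℝ), (deriv g (r - ρ) ^ 2 + b ^ 2 * (r - ρ) ^ 2 * g (r - ρ) ^ 2 -
          1 / (4 * (ρ + s) ^ 2) * g (r - ρ) ^ 2) := by
        rw [lForm_comp_sub_eq hsupp ha]
        exact setIntegral_mono_on
          (hdensity.integrable.sub (hf.inv_sq_mul_sq.integrable.const_mul _)).integrableOn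
          (hdensity.integrable.sub (hf.sq.integrable.const_mul _)).integrableOn
          measurableSet_Ioi fun r hr => sub_le_sub_left (hcentrifugal r hr) _
    _ = oscillatorForm b g - 1 / (4 * (ρ + s) ^ 2) * ∫ x, g x ^ 2 := by
      rw [integral_sub hdensity.integrable.integrableOn
          (hf.sq.integrable.const_mul _).integrableOn,
        integral_const_mul, setIntegral_comp_sub_sq hg hsupp hs, hdensity.setIntegral_Ioi,
        integral_sub_right_eq_self (fun x => deriv g x ^ 2 + b ^ 2 * x ^ 2 * g x ^ 2) ρ,
        oscillatorForm]

end ShiftedOscillator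

section UpperBound

open Polynomial

variable {a : ℝ → ℝ} {b c : ℝ}

lemma exists_muRadial_le_of_affine (hb : 0 < b) (d : ℕ) : ∃ C : ℝ, ∀ᶠ R in atTop, ∀ ρ > 2 * R,
    (∀ r ≥ ρ - 2 * R, a r = b * r + c) →
      muRadial a 0 (d + 1) (-(b * ρ + c)) ≤
        (2 * d + 1) * b + C / R ^ 4 - 1 / (4 * (ρ + 2 * R) ^ 2) := by
  obtain ⟨C, hC⟩ := exists_oscillatorForm_truncatedGaussian_le hb d
  refine ⟨C, ?_⟩
  filter_upwards [hC, eventually_gt_atTop 0] with R hosc hR ρ hρ ha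
  let T : degreeLT ℝ (d + 1) →ₗ[ℝ] ℝ → ℝ :=
    LinearMap.funLeft ℝ ℝ (fun r => r - ρ) ∘ₗ truncatedGaussian b R ∘ₗ
      (degreeLT ℝ (d + 1)).subtype
  have hT : Function.Injective T :=
    (LinearMap.funLeft_injective_of_surjective ℝ ℝ _ (Equiv.subRight ρ).surjective).comp
      ((truncatedGaussian_injective b hR).comp Subtype.val_injective)
  have hsmooth := contDiff_truncatedGaussian b R
  have hsupp := support_truncatedGaussian_subset b hR
  refine muRadial_le_of_injective (degreeLT.basis ℝ (d + 1)) (Nat.le_add_left 1 d) hT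
    (fun P => isTestR_comp_sub (hsmooth P) (hsupp P) hρ) fun P => ?_
  have hdeg : (P : ℝ[X]).natDegree ≤ d :=
    natDegree_le_of_degree_le (mem_degreeLE.mp (degreeLT_succ_eq_degreeLE (R := ℝ) ▸ P.2))
  calc lForm a 0 (-(b * ρ + c)) (T P)
      ≤ oscillatorForm b (truncatedGaussian b R P) -
          1 / (4 * (ρ + 2 * R) ^ 2) * ∫ x, truncatedGaussian b R P x ^ 2 :=
        lForm_comp_sub_le (hsmooth P) (hsupp P) hρ ha
    _ ≤ ((2 * d + 1) * b + C / R ^ 4) * (∫ x, truncatedGaussian b R P x ^ 2) -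
          1 / (4 * (ρ + 2 * R) ^ 2) * ∫ x, truncatedGaussian b R P x ^ 2 :=
        sub_le_sub_right (hosc P hdeg) _
    _ = _ := by
      rw [← sub_mul, ← setIntegral_comp_sub_sq (hsmooth P) (hsupp P) hρ]
      rfl

lemma exists_eventually_eq_affine (ha : ∀ᶠ r in atTop, HasDerivAt a b r) :
    ∃ c, ∀ᶠ r in atTop, a r = b * r + c := by
  obtain ⟨r₁, hr₁⟩ := eventually_atTop.mp ha
  have hline (r : ℝ) : HasDerivAt (fun r => b * r) b r := by
    simpa using (hasDerivAt_id r).const_mul b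
  have ha' : ∀ r ∈ Ioi r₁, HasDerivAt a b r := fun r hr => hr₁ r (le_of_lt hr)
  obtain ⟨c, hc⟩ := isOpen_Ioi.exists_eq_add_of_deriv_eq isPreconnected_Ioi
    (fun r hr => (ha' r hr).differentiableAt.differentiableWithinAt)
    (fun r _ => (hline r).differentiableAt.differentiableWithinAt)
    (fun r hr => (ha' r hr).deriv.trans (hline r).deriv.symm)
  exact ⟨c, (eventually_gt_atTop r₁).mono hc⟩

lemma eventually_mul_inv_sq_le (hb : 0 < b) (c C : ℝ) {ε γ : ℝ} (hε : 0 < ε)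
    (hγ : γ < b ^ 2 / (4 * (1 + 2 * ε) ^ 2)) :
    ∀ᶠ ρ in atTop,
      γ * (b * ρ + c)⁻¹ ^ 2 ≤ 1 / (4 * (ρ + 2 * (ε * ρ)) ^ 2) - C / (ε * ρ) ^ 4 := by
  have hlim : Tendsto
      (fun ρ => (b + c / ρ) ^ 2 * (1 / (4 * (1 + 2 * ε) ^ 2) - C / ε ^ 4 / ρ ^ 2)) atTop
      (nhds ((b + 0) ^ 2 * (1 / (4 * (1 + 2 * ε) ^ 2) - 0))) :=
    ((tendsto_const_nhds.add (tendsto_id.const_div_atTop c)).pow 2).mul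
      (tendsto_const_nhds.sub ((tendsto_pow_atTop two_ne_zero).const_div_atTop _))
  rw [add_zero, sub_zero, mul_one_div] at hlim
  have hpos : ∀ᶠ ρ in atTop, 0 < b * ρ + c :=
    (tendsto_atTop_add_const_right _ c (tendsto_id.const_mul_atTop hb)).eventually_gt_atTop 0
  filter_upwards [hlim.eventually_const_lt hγ, hpos, eventually_gt_atTop 0] with ρ hlt hk hρ
  rw [inv_pow, ← div_eq_mul_inv, div_le_iff₀ (by positivity)]
  convert hlt.le using 1
  field_simp

end UpperBound

theorem muRadial_strict_upper_bound_general {b₀ : ℝ} (hb₀ : 0 < b₀) {a : ℝ → ℝ}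
    (hab : ∀ᶠ r in atTop, HasDerivAt a b₀ r) {n : ℕ} (hn : 1 ≤ n) {γ : ℝ} (hγ : γ < b₀ ^ 2 / 4) :
    ∀ᶠ k in atTop, muRadial a 0 n (-k) ≤ (2 * (n : ℝ) - 1) * b₀ - γ * k⁻¹ ^ 2 := by
  obtain ⟨d, rfl⟩ := Nat.exists_eq_add_of_le' hn
  obtain ⟨c, haffine⟩ := exists_eventually_eq_affine hab
  obtain ⟨C, hC⟩ := exists_muRadial_le_of_affine (a := a) (c := c) hb₀ d
  obtain ⟨ε, hγε, hε, hε'⟩ :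
      ∃ ε, γ < b₀ ^ 2 / (4 * (1 + 2 * ε) ^ 2) ∧ 0 < ε ∧ ε < 1 / 2 := by
    have hcont : ContinuousAt (fun ε : ℝ => b₀ ^ 2 / (4 * (1 + 2 * ε) ^ 2)) 0 := by
      fun_prop (disch := norm_num)
    exact ((hcont.eventually_const_lt (by simpa using hγ)).filter_mono nhdsWithin_le_nhds |>.and
      (Ioo_mem_nhdsGT one_half_pos)).exists
  have hR : Tendsto (fun ρ => ε * ρ) atTop atTop := tendsto_id.const_mul_atTop hε
  have hr : Tendsto (fun ρ => (1 - 2 * ε) * ρ) atTop atTop :=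
    tendsto_id.const_mul_atTop (by linarith)
  -- Parametrise `k = b₀ ρ + c` by the centre `ρ` of the magnetic well `(a - k)²`.
  suffices hρ : ∀ᶠ ρ in atTop, muRadial a 0 (d + 1) (-(b₀ * ρ + c)) ≤
      (2 * ((d + 1 : ℕ) : ℝ) - 1) * b₀ - γ * (b₀ * ρ + c)⁻¹ ^ 2 by
    have hk : Tendsto (fun k => (k - c) / b₀) atTop atTop :=
      (tendsto_atTop_add_const_right _ (-c) tendsto_id).atTop_div_const hb₀
    filter_upwards [hk.eventually hρ] with k hle
    rwa [mul_div_cancel₀ _ hb₀.ne', sub_add_cancel] at hle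
  filter_upwards [hR.eventually hC, hr.eventually_forall_ge_atTop haffine,
    eventually_mul_inv_sq_le hb₀ c C hε hγε, eventually_gt_atTop 0] with ρ hmu ha hgain hρ
  have hle := hmu ρ (by nlinarith) fun r hr => ha r (by linarith)
  push_cast
  linarith

/-- Proposition 4.8 of the paper: for a field which is constant (`a'(r) = b₀ > 0`) for large
`r`, the `m = 0` min-max values satisfy `μ_{n,0}(-k) ≤ (2n-1) b₀ - γ_n k⁻²` for large `k`. -/
theorem muRadial_strict_upper_bound (b₀ : ℝ) (hb₀ : 0 < b₀) (a : ℝ → ℝ)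
    (ha : ∀ R > (0:ℝ), IntegrableOn (fun r => (a r) ^ 2 * r) (Set.Ioc 0 R))
    (hab : ∃ r₁ > (0:ℝ), ∀ r ≥ r₁, HasDerivAt a b₀ r) :
    ∀ n : ℕ, 1 ≤ n → ∃ γ > (0:ℝ), ∃ k₀ > (0:ℝ), ∀ k ≥ k₀,
      muRadial a 0 n (-k) ≤ (2 * (n : ℝ) - 1) * b₀ - γ * k⁻¹ ^ 2 := by
  intro n hn
  obtain ⟨r₁, -, hr₁⟩ := hab
  obtain ⟨k₀, hk₀, hle⟩ := (atTop_basis' 1).eventually_iff.mp <|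
    muRadial_strict_upper_bound_general hb₀ (eventually_atTop.mpr ⟨r₁, hr₁⟩) hn
      (show b₀ ^ 2 / 8 < b₀ ^ 2 / 4 by gcongr; norm_num)
  exact ⟨b₀ ^ 2 / 8, by positivity, k₀, zero_lt_one.trans_le hk₀, fun k hk => hle hk⟩
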